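/- arXiv:2002.06981 — 3 statements merged into one kernel-verified Lean document; each statement's English description precedes it below -/
import Mathlib

section
/- Let U, V, W be finite-dimensional inner product spaces over ℂ and let a : U → V, b : V → W be linear maps with b ∘ a = 0. Define Δ_V := a ∘ a† + b† ∘ b. Let λ ∈ ℂ with λ ≠ 0, and let E := ker(Δ_V − λ·id), F := E ∩ ker(b), G := E ∩ ker(a†). Then E is the internal direct sum of F and G, i.e. F ∩ G = {0} and F + G = E. -/
open LinearMap

/-- For a two-step complex `a : U → V`, `b : V → W` with `b ∘ a = 0` and Hodge Laplacian
`Δ_V = a a† + b† b`, any nonzero-eigenvalue eigenspace `E = ker (Δ_V - λ id)` is the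
internal direct sum of its subspaces `F = E ∩ ker b` of closed eigenvectors and
`G = E ∩ ker a†` of coclosed eigenvectors. -/
theorem stmt_14
    {U V W : Type*}
    [NormedAddCommGroup U] [InnerProductSpace ℂ U] [FiniteDimensional ℂ U]
    [NormedAddCommGroup V] [InnerProductSpace ℂ V] [FiniteDimensional ℂ V]
    [NormedAddCommGroup W] [InnerProductSpace ℂ W] [FiniteDimensional ℂ W]
    (a : U →ₗ[ℂ] V) (b : V →ₗ[ℂ] W) (hba : b ∘ₗ a = 0)
    (lam : ℂ) (hlam : lam ≠ 0)
    (E F G : Submodule ℂ V)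
    (hE : E = ker (a ∘ₗ adjoint a + adjoint b ∘ₗ b - lam • LinearMap.id))
    (hF : F = E ⊓ ker b) (hG : G = E ⊓ ker (adjoint a)) :
    F ⊓ G = ⊥ ∧ F ⊔ G = E := by
  have hba' : ∀ u, b (a u) = 0 := fun u => by
    simpa using LinearMap.congr_fun hba u
  have hab : ∀ w, adjoint a (adjoint b w) = 0 := fun w => by
    have h : adjoint a ∘ₗ adjoint b = 0 := by
      rw [← LinearMap.adjoint_comp, hba, map_zero]
    simpa using LinearMap.congr_fun h w
  have mE : ∀ x, x ∈ E ↔ a (adjoint a x) + adjoint b (b x) = lam • x := fun x => by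
    rw [hE]
    simp [sub_eq_zero]
  subst hF hG
  constructor
  · rw [eq_bot_iff]
    rintro x ⟨⟨hx, hbx⟩, -, hax⟩
    have h := (mE x).1 hx
    rw [LinearMap.mem_ker.1 hbx, LinearMap.mem_ker.1 hax] at h
    simp only [map_zero, add_zero] at h
    exact (Submodule.mem_bot ℂ).2 ((smul_eq_zero.1 h.symm).resolve_left hlam)
  · apply le_antisymm (sup_le inf_le_left inf_le_left)
    intro x hx
    have h := (mE x).1 hx
    have h1 : a (adjoint a x) ∈ E := by
      rw [mE, hba', map_zero, add_zero]
      have := congrArg (fun y => a (adjoint a y)) h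
      simpa [hab] using this
    have h2 : adjoint b (b x) ∈ E := by
      rw [mE, hab, map_zero, zero_add]
      have := congrArg (fun y => adjoint b (b y)) h
      simpa [hba'] using this
    have hx' : x = lam⁻¹ • a (adjoint a x) + lam⁻¹ • adjoint b (b x) := by
      rw [← smul_add, h, inv_smul_smul₀ hlam]
    rw [hx']
    exact Submodule.add_mem_sup
      (Submodule.smul_mem _ _ ⟨h1, LinearMap.mem_ker.2 (hba' _)⟩)
      (Submodule.smul_mem _ _ ⟨h2, LinearMap.mem_ker.2 (hab _)⟩)
end

section
/- Let U, V, W, X be finite-dimensional inner product spaces over ℂ and let a : U → V, b : V → W, c : W → X be linear maps with b ∘ a = 0 and c ∘ b = 0. Define Δ_V := a ∘ a† + b† ∘ b and Δ_W := b ∘ b† + c† ∘ c. Let λ ∈ ℂ with λ ≠ 0, and set G := ker(Δ_V − λ·id) ∩ ker(a†) and F' := ker(Δ_W − λ·id) ∩ ker(c). Then b maps G into F' and the restriction of b to G is a linear bijection from G onto F'. -/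
open LinearMap

/-- For a cochain complex `U → V → W → X` of finite-dimensional complex inner product
spaces with Hodge Laplacians `Δ_V = a a† + b† b` and `Δ_W = b b† + c† c`, and a nonzero
eigenvalue `λ`, the differential `b` maps the space `G` of coclosed `λ`-eigenvectors of
`Δ_V` into the space `F'` of closed `λ`-eigenvectors of `Δ_W`, and restricts to a
bijection from `G` onto `F'`. -/
theorem stmt_15
    {U V W X : Type*}
    [NormedAddCommGroup U] [InnerProductSpace ℂ U] [FiniteDimensional ℂ U]
    [NormedAddCommGroup V] [InnerProductSpace ℂ V] [FiniteDimensional ℂ V]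
    [NormedAddCommGroup W] [InnerProductSpace ℂ W] [FiniteDimensional ℂ W]
    [NormedAddCommGroup X] [InnerProductSpace ℂ X] [FiniteDimensional ℂ X]
    (a : U →ₗ[ℂ] V) (b : V →ₗ[ℂ] W) (c : W →ₗ[ℂ] X)
    (hba : b ∘ₗ a = 0) (hcb : c ∘ₗ b = 0)
    (lam : ℂ) (hlam : lam ≠ 0)
    (G : Submodule ℂ V) (F' : Submodule ℂ W)
    (hG : G = ker (a ∘ₗ adjoint a + adjoint b ∘ₗ b - lam • LinearMap.id) ⊓
      ker (adjoint a))
    (hF' : F' = ker (b ∘ₗ adjoint b + adjoint c ∘ₗ c - lam • LinearMap.id) ⊓ ker c) :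
    Set.MapsTo b G F' ∧ Set.BijOn b G F' := by
  have hab : ∀ w, adjoint a (adjoint b w) = 0 := by
    intro w
    have h : adjoint (b ∘ₗ a) = 0 := by rw [hba]; simp
    rw [adjoint_comp] at h
    exact LinearMap.congr_fun h w
  have hcb' : ∀ v, c (b v) = 0 := fun v => LinearMap.congr_fun hcb v
  have mG : ∀ v, v ∈ G ↔ adjoint b (b v) = lam • v ∧ adjoint a v = 0 := by
    intro v
    rw [hG, Submodule.mem_inf, mem_ker, mem_ker]
    refine and_congr_left fun h => ?_
    simp [h, sub_eq_zero]
  have mF : ∀ w, w ∈ F' ↔ b (adjoint b w) = lam • w ∧ c w = 0 := by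
    intro w
    rw [hF', Submodule.mem_inf, mem_ker, mem_ker]
    refine and_congr_left fun h => ?_
    simp [h, sub_eq_zero]
  have hm : Set.MapsTo b G F' := by
    intro v hv
    obtain ⟨h1, -⟩ := (mG v).1 hv
    exact (mF _).2 ⟨by rw [h1, map_smul], hcb' v⟩
  refine ⟨hm, hm, ?_, ?_⟩
  · intro v hv v' hv' h
    obtain ⟨h1, -⟩ := (mG v).1 hv
    obtain ⟨h2, -⟩ := (mG v').1 hv'
    have h' : b v = b v' := h
    rw [h', h2] at h1
    exact (smul_right_injective V hlam h1).symm
  · intro w hw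
    obtain ⟨h1, -⟩ := (mF w).1 hw
    refine ⟨lam⁻¹ • adjoint b w, (mG _).2 ⟨?_, ?_⟩, ?_⟩
    · rw [map_smul, h1, smul_smul, inv_mul_cancel₀ hlam, one_smul, smul_smul,
        mul_inv_cancel₀ hlam, one_smul]
    · rw [map_smul, hab, smul_zero]
    · rw [map_smul, h1, smul_smul, inv_mul_cancel₀ hlam, one_smul]
end

section
/- Let U, V, W, X be finite-dimensional inner product spaces over ℂ and let a : U → V, b : V → W, c : W → X be linear maps with b ∘ a = 0 and c ∘ b = 0. Define Δ_V := a ∘ a† + b† ∘ b and Δ_W := b ∘ b† + c† ∘ c. Let λ ∈ ℂ with λ ≠ 0. Then dim ker(Δ_V − λ·id) = dim(ker(Δ_V − λ·id) ∩ ker(b)) + dim(ker(Δ_W − λ·id) ∩ ker(c)). -/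
open LinearMap

/-- For a cochain complex `U → V → W → X` of finite-dimensional complex inner product
spaces with Hodge Laplacians `Δ_V = a a† + b† b` and `Δ_W = b b† + c† c`, the multiplicity
of a nonzero eigenvalue `λ` of `Δ_V` equals the dimension of the closed `λ`-eigenvectors
of `Δ_V` plus the dimension of the closed `λ`-eigenvectors of `Δ_W`. -/
theorem stmt_16
    {U V W X : Type*}
    [NormedAddCommGroup U] [InnerProductSpace ℂ U] [FiniteDimensional ℂ U]
    [NormedAddCommGroup V] [InnerProductSpace ℂ V] [FiniteDimensional ℂ V]
    [NormedAddCommGroup W] [InnerProductSpace ℂ W] [FiniteDimensional ℂ W]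
    [NormedAddCommGroup X] [InnerProductSpace ℂ X] [FiniteDimensional ℂ X]
    (a : U →ₗ[ℂ] V) (b : V →ₗ[ℂ] W) (c : W →ₗ[ℂ] X)
    (hba : b ∘ₗ a = 0) (hcb : c ∘ₗ b = 0)
    (lam : ℂ) (hlam : lam ≠ 0) :
    Module.finrank ℂ
        ↥(ker (a ∘ₗ adjoint a + adjoint b ∘ₗ b - lam • LinearMap.id)) =
      Module.finrank ℂ
          ↥(ker (a ∘ₗ adjoint a + adjoint b ∘ₗ b - lam • LinearMap.id) ⊓ ker b) +
        Module.finrank ℂ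
          ↥(ker (b ∘ₗ adjoint b + adjoint c ∘ₗ c - lam • LinearMap.id) ⊓ ker c) := by
  have hab : ∀ w, adjoint a (adjoint b w) = 0 := by
    intro w
    have h := congrArg adjoint hba
    rw [adjoint_comp, map_zero] at h
    exact LinearMap.congr_fun h w
  have hba' : ∀ u, b (a u) = 0 := fun u => LinearMap.congr_fun hba u
  have hcb' : ∀ v, c (b v) = 0 := fun v => LinearMap.congr_fun hcb v
  set K := ker (a ∘ₗ adjoint a + adjoint b ∘ₗ b - lam • LinearMap.id) with hK
  have hmem : ∀ v, v ∈ K ↔ a (adjoint a v) + adjoint b (b v) = lam • v := by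
    intro v
    simp [hK, LinearMap.mem_ker, sub_eq_zero]
  have himg : K.map b =
      ker (b ∘ₗ adjoint b + adjoint c ∘ₗ c - lam • LinearMap.id) ⊓ ker c := by
    ext w
    simp only [Submodule.mem_map, Submodule.mem_inf, LinearMap.mem_ker, LinearMap.sub_apply,
      LinearMap.add_apply, LinearMap.comp_apply, LinearMap.smul_apply, LinearMap.id_apply,
      sub_eq_zero]
    constructor
    · rintro ⟨v, hv, rfl⟩
      rw [hmem] at hv
      have h := congrArg b hv
      rw [map_add, hba', zero_add, map_smul] at h
      refine ⟨?_, hcb' v⟩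
      rw [hcb', map_zero, add_zero, h]
    · rintro ⟨h, hc⟩
      rw [hc, map_zero, add_zero] at h
      have hb : b (lam⁻¹ • adjoint b w) = w := by
        rw [map_smul, h, smul_smul, inv_mul_cancel₀ hlam, one_smul]
      refine ⟨lam⁻¹ • adjoint b w, ?_, hb⟩
      rw [hmem, hb, map_smul, hab, smul_zero, map_zero, zero_add, smul_smul,
        mul_inv_cancel₀ hlam, one_smul]
  have hker : (ker (b.domRestrict K)).map K.subtype = K ⊓ ker b := by
    ext v
    simp [LinearMap.mem_ker, and_comm]
  have h := LinearMap.finrank_range_add_finrank_ker (b.domRestrict K)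
  rw [← himg, ← hker, Submodule.finrank_map_subtype_eq, ← h, LinearMap.range_domRestrict,
    add_comm]
end
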